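/- arXiv:2503.21678 — 4 statements merged into one kernel-verified Lean document; each statement's English description precedes it below -/
import Mathlib

section
/- Let 0 ≤ m < n be integers, let μ be a bounded signed Borel measure on [0,1], and let I ⊆ ℝ be a nonempty open interval bounded from below. Then the inequality ∫_{[0,1]} f((1−t)x + t y) dμ(t) ≥ 0 holds for all x, y ∈ I with x < y and for every f : I → ℝ that is simultaneously k-increasing on I for every k ∈ {m, m+1, …, n}, if and only if the following three conditions hold: (i) μ_0(0) = … = μ_{m−1}(0) = 0; (ii) μ_k(0) ≥ 0 for all k ∈ {m,…,n−1}; (iii) μ_{n−1}^+(τ) ≥ 0 for all τ ∈ (0,1]. -/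
open MeasureTheory Set

/-- Integral of `f` over the set `A` with respect to the (automatically bounded) signed
Borel measure `μ`, defined via the Jordan decomposition. -/
noncomputable def sInt (μ : MeasureTheory.SignedMeasure ℝ) (A : Set ℝ) (f : ℝ → ℝ) : ℝ :=
  (∫ t in A, f t ∂μ.toJordanDecomposition.posPart) -
  (∫ t in A, f t ∂μ.toJordanDecomposition.negPart)

/-- `μ_k(τ) = ∫_{[0,1]} (t-τ)^k dμ(t)` (with the convention `0^0 = 1`). -/
noncomputable def muK (μ : MeasureTheory.SignedMeasure ℝ) (k : ℕ) (τ : ℝ) : ℝ :=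
  sInt μ (Icc 0 1) (fun t => (t - τ) ^ k)

/-- `μ_k^-(τ) = ∫_{[0,τ)} (t-τ)^k dμ(t)`. -/
noncomputable def muMinus (μ : MeasureTheory.SignedMeasure ℝ) (k : ℕ) (τ : ℝ) : ℝ :=
  sInt μ (Ico 0 τ) (fun t => (t - τ) ^ k)

/-- `μ_k^+(τ) = ∫_{(τ,1]} (t-τ)^k dμ(t)`. -/
noncomputable def muPlus (μ : MeasureTheory.SignedMeasure ℝ) (k : ℕ) (τ : ℝ) : ℝ :=
  sInt μ (Ioc τ 1) (fun t => (t - τ) ^ k)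

/-- The `n`th-order divided difference of `f` at the points `x 0, …, x n`. -/
noncomputable def divDiff (f : ℝ → ℝ) (n : ℕ) (x : Fin (n + 1) → ℝ) : ℝ :=
  ∑ j : Fin (n + 1), f (x j) / ∏ i ∈ Finset.univ.erase j, (x j - x i)

/-- `f` is `n`-increasing on `I`: all `n`th-order divided differences at pairwise
distinct points of `I` are nonnegative. -/
def nIncreasingOn (f : ℝ → ℝ) (I : Set ℝ) (n : ℕ) : Prop :=
  ∀ x : Fin (n + 1) → ℝ, Function.Injective x → (∀ j, x j ∈ I) → 0 ≤ divDiff f n x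

/-- `f` is `n`-decreasing on `I` if `-f` is `n`-increasing on `I`. -/
def nDecreasingOn (f : ℝ → ℝ) (I : Set ℝ) (n : ℕ) : Prop :=
  nIncreasingOn (fun u => -f u) I n

/-- `φ⁺_{p,n}(u) = ((u-p)_+)^n` for `n ≥ 1`, and `φ⁺_{p,0}` is the characteristic
function of `(p,∞)`. -/
noncomputable def phiPlus (p : ℝ) (n : ℕ) (u : ℝ) : ℝ :=
  if n = 0 then (if p < u then 1 else 0) else (max 0 (u - p)) ^ n

/-- `φ⁻_{p,n}(u) = ((u-p)_−)^n` for `n ≥ 1`, and `φ⁻_{p,0}` is the characteristic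
function of `(−∞,p)`. -/
noncomputable def phiMinus (p : ℝ) (n : ℕ) (u : ℝ) : ℝ :=
  if n = 0 then (if u < p then 1 else 0) else (max 0 (p - u)) ^ n

/- The set `J(p)` associated with an interval `I` and a point `p ∈ ℝ`:
`(−∞, (p − inf I)/(sup I − inf I))` if `p ≤ inf I` (interpreted as `(−∞,0)` when `I` is
unbounded above), `ℝ` if `p ∈ I`, and `(1 + (p − sup I)/(sup I − inf I), ∞)` if
`p ≥ sup I` (interpreted as `(1,∞)` when `I` is unbounded below). -/
open scoped Classical in
noncomputable def Jset (I : Set ℝ) (p : ℝ) : Set ℝ :=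
  if p ∈ I then Set.univ
  else if p ∈ lowerBounds I then
    (if BddAbove I then Set.Iio ((p - sInf I) / (sSup I - sInf I)) else Set.Iio 0)
  else
    (if BddBelow I then Set.Ioi (1 + (p - sSup I) / (sSup I - sInf I)) else Set.Ioi 1)


/-- Divided difference on a finite set of nodes. -/
noncomputable def finDD (f : ℝ → ℝ) (s : Finset ℝ) : ℝ :=
  ∑ a ∈ s, f a / ∏ b ∈ s.erase a, (a - b)

theorem divDiff_eq_finDD (f : ℝ → ℝ) (n : ℕ) (x : Fin (n + 1) → ℝ) (hx : Function.Injective x) :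
    divDiff f n x = finDD f (Finset.univ.image x) := by
  unfold divDiff finDD
  rw [Finset.sum_image (fun a _ b _ h => hx h)]
  refine Finset.sum_congr rfl fun j _ => ?_
  congr 1
  rw [← Finset.image_erase hx, Finset.prod_image (fun a _ b _ h => hx h)]

theorem nInc_iff (f : ℝ → ℝ) (I : Set ℝ) (n : ℕ) :
    nIncreasingOn f I n ↔ ∀ s : Finset ℝ, s.card = n + 1 → (∀ a ∈ s, a ∈ I) → 0 ≤ finDD f s := by
  constructor
  · intro h s hs hI
    have e := s.equivFinOfCardEq hs
    have hinj : Function.Injective (fun i => ((e.symm i : s) : ℝ)) :=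
      Subtype.val_injective.comp e.symm.injective
    have h1 := h (fun i => ((e.symm i : s) : ℝ)) hinj (fun j => hI _ (e.symm j).2)
    rw [divDiff_eq_finDD _ _ _ hinj] at h1
    have : Finset.univ.image (fun i => ((e.symm i : s) : ℝ)) = s := by
      ext a
      simp only [Finset.mem_image, Finset.mem_univ, true_and]
      constructor
      · rintro ⟨i, rfl⟩; exact (e.symm i).2
      · intro ha; exact ⟨e ⟨a, ha⟩, by simp⟩
    rwa [this] at h1
  · intro h x hx hI
    rw [divDiff_eq_finDD _ _ _ hx]
    apply h
    · rw [Finset.card_image_of_injective _ hx]; simp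
    · intro a ha
      simp only [Finset.mem_image, Finset.mem_univ, true_and] at ha
      obtain ⟨i, rfl⟩ := ha
      exact hI i

theorem finDD_insert (f : ℝ → ℝ) (s : Finset ℝ) (a : ℝ) (ha : a ∉ s) :
    finDD f (insert a s) = f a / ∏ b ∈ s, (a - b) +
      ∑ c ∈ s, f c / ((c - a) * ∏ b ∈ s.erase c, (c - b)) := by
  unfold finDD
  rw [Finset.sum_insert ha, Finset.erase_insert ha]
  congr 1
  refine Finset.sum_congr rfl fun c hc => ?_
  have hca : a ≠ c := fun h => ha (h ▸ hc)
  rw [Finset.erase_insert_of_ne hca, Finset.prod_insert (fun h => ha (Finset.mem_of_mem_erase h))]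

theorem finDD_diff (f : ℝ → ℝ) (s : Finset ℝ) (a b : ℝ) (ha : a ∉ s) (hb : b ∉ s) (hab : a ≠ b) :
    finDD f (insert a s) - finDD f (insert b s) = (a - b) * finDD f (insert a (insert b s)) := by
  have h1 : a ∉ insert b s := by simp [hab, ha]
  rw [finDD_insert f _ a h1, finDD_insert f s a ha, finDD_insert f s b hb, Finset.sum_insert hb,
    Finset.prod_insert hb, Finset.erase_insert hb]
  have hab' : a - b ≠ 0 := sub_ne_zero.2 hab
  have hba' : b - a ≠ 0 := sub_ne_zero.2 hab.symm
  have hA : ∏ c ∈ s, (a - c) ≠ 0 :=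
    Finset.prod_ne_zero_iff.2 fun c hc => sub_ne_zero.2 fun h => ha (h ▸ hc)
  have hB : ∏ c ∈ s, (b - c) ≠ 0 :=
    Finset.prod_ne_zero_iff.2 fun c hc => sub_ne_zero.2 fun h => hb (h ▸ hc)
  have key : ∑ c ∈ s, f c / ((c - a) * ∏ d ∈ s.erase c, (c - d)) -
      ∑ c ∈ s, f c / ((c - b) * ∏ d ∈ s.erase c, (c - d)) =
      (a - b) * ∑ c ∈ s, f c / ((c - a) * ∏ d ∈ (insert b s).erase c, (c - d)) := by
    rw [Finset.mul_sum, ← Finset.sum_sub_distrib]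
    refine Finset.sum_congr rfl fun c hc => ?_
    have hca : c - a ≠ 0 := sub_ne_zero.2 fun h => ha (h ▸ hc)
    have hcb0 : b ≠ c := fun h => hb (h ▸ hc)
    have hcb : c - b ≠ 0 := sub_ne_zero.2 hcb0.symm
    have hP : ∏ d ∈ s.erase c, (c - d) ≠ 0 :=
      Finset.prod_ne_zero_iff.2 fun d hd => sub_ne_zero.2 (Finset.ne_of_mem_erase hd).symm
    rw [Finset.erase_insert_of_ne hcb0,
      Finset.prod_insert (fun h => hb (Finset.mem_of_mem_erase h))]
    field_simp
    ring
  have e1 : f a / ∏ c ∈ s, (a - c) = (a - b) * (f a / ((a - b) * ∏ c ∈ s, (a - c))) := by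
    field_simp
  have e2 : - (f b / ∏ c ∈ s, (b - c)) = (a - b) * (f b / ((b - a) * ∏ c ∈ s, (b - c))) := by
    field_simp
    ring
  linear_combination key + e1 + e2

theorem finDD_leibniz (f : ℝ → ℝ) (s : Finset ℝ) (a p : ℝ) (ha : a ∉ s) :
    finDD (fun u => (u - p) * f u) (insert a s) = finDD f s + (a - p) * finDD f (insert a s) := by
  rw [finDD_insert _ s a ha, finDD_insert _ s a ha]
  unfold finDD
  have key : ∑ c ∈ s, (c - p) * f c / ((c - a) * ∏ d ∈ s.erase c, (c - d)) =
      ∑ c ∈ s, f c / ∏ d ∈ s.erase c, (c - d) +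
      (a - p) * ∑ c ∈ s, f c / ((c - a) * ∏ d ∈ s.erase c, (c - d)) := by
    rw [Finset.mul_sum, ← Finset.sum_add_distrib]
    refine Finset.sum_congr rfl fun c hc => ?_
    have hca : c - a ≠ 0 := sub_ne_zero.2 fun h => ha (h ▸ hc)
    have hP : ∏ d ∈ s.erase c, (c - d) ≠ 0 :=
      Finset.prod_ne_zero_iff.2 fun d hd => sub_ne_zero.2 (Finset.ne_of_mem_erase hd).symm
    field_simp
    ring
  rw [key]
  ring

theorem finDD_congr {f g : ℝ → ℝ} {s : Finset ℝ} (h : ∀ a ∈ s, f a = g a) :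
    finDD f s = finDD g s := by
  unfold finDD
  exact Finset.sum_congr rfl fun a ha => by rw [h a ha]

theorem finDD_sub_mul (f g : ℝ → ℝ) (c : ℝ) (s : Finset ℝ) :
    finDD (fun u => f u - c * g u) s = finDD f s - c * finDD g s := by
  unfold finDD
  rw [Finset.mul_sum, ← Finset.sum_sub_distrib]
  exact Finset.sum_congr rfl fun a _ => by ring

theorem finDD_mul (g : ℝ → ℝ) (c : ℝ) (s : Finset ℝ) :
    finDD (fun u => c * g u) s = c * finDD g s := by
  unfold finDD
  rw [Finset.mul_sum]
  exact Finset.sum_congr rfl fun a _ => by ring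

theorem finDD_singleton (f : ℝ → ℝ) (a : ℝ) : finDD f {a} = f a := by
  simp [finDD]

theorem finDD_zero (s : Finset ℝ) : finDD (fun _ => 0) s = 0 := by
  simp [finDD]

theorem finDD_pair (f : ℝ → ℝ) (a b : ℝ) (hab : a < b) :
    finDD f {a, b} = (f b - f a) / (b - a) := by
  have h := finDD_diff f ∅ a b (by simp) (by simp) hab.ne
  simp only [insert_empty_eq, finDD_singleton] at h
  rw [eq_div_iff (by linarith)]
  linarith

theorem finDD_one (k : ℕ) : ∀ s : Finset ℝ, s.card = k + 2 → finDD (fun _ => 1) s = 0 := by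
  induction k with
  | zero =>
    intro s hs
    obtain ⟨a, b, hab, rfl⟩ := Finset.card_eq_two.1 hs
    have h := finDD_diff (fun _ => 1) ∅ a b (by simp) (by simp) hab
    simp only [insert_empty_eq, finDD_singleton] at h
    have : a - b ≠ 0 := sub_ne_zero.2 hab
    simpa [this] using h
  | succ k ih =>
    intro s hs
    obtain ⟨a, t, ha, rfl, ht⟩ := Finset.card_eq_succ.1 hs
    obtain ⟨b, u, hb, rfl, hu⟩ := Finset.card_eq_succ.1 ht
    have hau : a ∉ u := fun h => ha (Finset.mem_insert_of_mem h)
    have hab : a ≠ b := fun h => ha (h ▸ Finset.mem_insert_self _ _)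
    have h := finDD_diff (fun _ => 1) u a b hau hb hab
    rw [ih _ (by rw [Finset.card_insert_of_notMem hau, hu]),
      ih _ (by rw [Finset.card_insert_of_notMem hb, hu])] at h
    have : a - b ≠ 0 := sub_ne_zero.2 hab
    simpa [this] using h

theorem finDD_pow_nonneg (p : ℝ) (j : ℕ) : ∀ s : Finset ℝ, s.Nonempty → (∀ a ∈ s, p ≤ a) →
    0 ≤ finDD (fun u => (u - p) ^ j) s := by
  induction j with
  | zero =>
    intro s hs _
    simp only [pow_zero]
    obtain ⟨k, hk⟩ : ∃ k, s.card = k + 1 := ⟨s.card - 1, by have := hs.card_pos; omega⟩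
    rcases k with _ | k
    · obtain ⟨a, rfl⟩ := Finset.card_eq_one.1 hk
      simp [finDD_singleton]
    · rw [finDD_one k s hk]
  | succ j ih =>
    intro s hs hp
    obtain ⟨a, ha⟩ := hs
    have e : (fun u : ℝ => (u - p) ^ (j + 1)) = fun u => (u - p) * (u - p) ^ j := by
      funext u; ring
    rw [← Finset.insert_erase ha, e, finDD_leibniz _ _ _ _ (Finset.notMem_erase a s),
      Finset.insert_erase ha]
    refine add_nonneg ?_ (mul_nonneg (sub_nonneg.2 (hp a ha)) (ih s ⟨a, ha⟩ hp))
    rcases (s.erase a).eq_empty_or_nonempty with h | h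
    · rw [h]; simp [finDD]
    · exact ih _ h fun b hb => hp b (Finset.mem_of_mem_erase hb)

theorem finDD_pow_zero (p : ℝ) (j : ℕ) : ∀ s : Finset ℝ, j + 2 ≤ s.card →
    finDD (fun u => (u - p) ^ j) s = 0 := by
  induction j with
  | zero =>
    intro s hs
    simp only [pow_zero]
    exact finDD_one (s.card - 2) s (by omega)
  | succ j ih =>
    intro s hs
    obtain ⟨a, ha⟩ : s.Nonempty := Finset.card_pos.1 (by omega)
    have e : (fun u : ℝ => (u - p) ^ (j + 1)) = fun u => (u - p) * (u - p) ^ j := by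
      funext u; ring
    rw [← Finset.insert_erase ha, e, finDD_leibniz _ _ _ _ (Finset.notMem_erase a s),
      Finset.insert_erase ha, ih _ (by rw [Finset.card_erase_of_mem ha]; omega), ih _ (by omega)]
    ring

theorem finDD_pow_one (p : ℝ) (j : ℕ) : ∀ s : Finset ℝ, s.card = j + 1 →
    finDD (fun u => (u - p) ^ j) s = 1 := by
  induction j with
  | zero =>
    intro s hs
    obtain ⟨a, rfl⟩ := Finset.card_eq_one.1 hs
    simp [finDD_singleton]
  | succ j ih =>
    intro s hs
    obtain ⟨a, ha⟩ : s.Nonempty := Finset.card_pos.1 (by omega)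
    have e : (fun u : ℝ => (u - p) ^ (j + 1)) = fun u => (u - p) * (u - p) ^ j := by
      funext u; ring
    rw [← Finset.insert_erase ha, e, finDD_leibniz _ _ _ _ (Finset.notMem_erase a s),
      Finset.insert_erase ha, ih _ (by rw [Finset.card_erase_of_mem ha]; omega),
      finDD_pow_zero _ _ _ (by omega)]
    ring

/-- Truncated power. -/
noncomputable def tpow (p : ℝ) (k : ℕ) (u : ℝ) : ℝ := if p < u then (u - p) ^ k else 0

theorem tpow_nonneg (p : ℝ) (k : ℕ) (u : ℝ) : 0 ≤ tpow p k u := by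
  unfold tpow
  split_ifs with h
  · exact pow_nonneg (by linarith) _
  · exact le_rfl

theorem tpow_mono (p : ℝ) (k : ℕ) : Monotone (tpow p k) := by
  intro a b hab
  unfold tpow
  split_ifs with h1 h2 h2
  · exact pow_le_pow_left₀ (by linarith) (by linarith) _
  · linarith
  · exact pow_nonneg (by linarith) _
  · exact le_rfl

theorem finDD_tpow (p : ℝ) (k : ℕ) : ∀ s : Finset ℝ, s.Nonempty → s.card ≤ k + 2 →
    0 ≤ finDD (tpow p k) s := by
  induction k with
  | zero =>
    intro s hs hc
    have := hs.card_pos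
    obtain h | h : s.card = 1 ∨ s.card = 2 := by omega
    · obtain ⟨a, rfl⟩ := Finset.card_eq_one.1 h
      rw [finDD_singleton]; exact tpow_nonneg _ _ _
    · obtain ⟨a, b, hab, rfl⟩ := Finset.card_eq_two.1 h
      rcases lt_or_gt_of_ne hab with h | h
      · rw [finDD_pair _ _ _ h]
        exact div_nonneg (sub_nonneg.2 (tpow_mono _ _ h.le)) (by linarith)
      · rw [Finset.pair_comm, finDD_pair _ _ _ h]
        exact div_nonneg (sub_nonneg.2 (tpow_mono _ _ h.le)) (by linarith)
  | succ k ih =>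
    intro s hs hc
    have ha := s.min'_mem hs
    have hb := s.max'_mem hs
    set a := s.min' hs with hadef
    set b := s.max' hs with hbdef
    have hale : ∀ c ∈ s, a ≤ c := fun c hc => s.min'_le c hc
    have hble : ∀ c ∈ s, c ≤ b := fun c hc => s.le_max' c hc
    clear_value a b
    by_cases hpa : p < a
    · rw [finDD_congr (g := fun u => (u - p) ^ (k + 1))]
      · exact finDD_pow_nonneg _ _ _ hs fun c hc => hpa.le.trans (hale c hc)
      · intro c hc
        simp [tpow, hpa.trans_le (hale c hc)]
    by_cases hpb : b ≤ p
    · rw [finDD_congr (g := fun u => 0), finDD_zero]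
      intro c hc
      have := (hble c hc).trans hpb
      simp [tpow, this.not_gt]
    push Not at hpa hpb
    have hab : a < b := lt_of_le_of_lt hpa hpb
    set t := (s.erase a).erase b with ht
    have hbe : b ∈ s.erase a := Finset.mem_erase.2 ⟨hab.ne', hb⟩
    have h1 : insert b t = s.erase a := Finset.insert_erase hbe
    have h2 : insert a (insert b t) = s := by rw [h1, Finset.insert_erase ha]
    have hat : a ∉ t := by simp [ht]
    have hbt : b ∉ t := by simp [ht]
    have habt : a ∉ insert b t := by simp [hab.ne, hat]
    have e : tpow p (k + 1) = fun u => (u - p) * tpow p k u := by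
      funext u
      unfold tpow
      split_ifs
      · ring
      · ring
    have hcard : s.card = t.card + 2 := by
      rw [← h2, Finset.card_insert_of_notMem habt, Finset.card_insert_of_notMem hbt]
    have hL := finDD_leibniz (tpow p k) (insert b t) a p habt
    have hD := finDD_diff (tpow p k) t a b hat hbt hab.ne
    have hA := ih (insert a t) (Finset.insert_nonempty _ _)
      (by rw [Finset.card_insert_of_notMem hat]; omega)
    have hB := ih (insert b t) (Finset.insert_nonempty _ _)
      (by rw [Finset.card_insert_of_notMem hbt]; omega)
    rw [← h2, e, hL]
    have : (b - a) * (finDD (tpow p k) (insert b t) +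
        (a - p) * finDD (tpow p k) (insert a (insert b t))) =
        (b - p) * finDD (tpow p k) (insert b t) + (p - a) * finDD (tpow p k) (insert a t) := by
      linear_combination (a - p) * hD
    have h3 : 0 ≤ (b - a) * (finDD (tpow p k) (insert b t) +
        (a - p) * finDD (tpow p k) (insert a (insert b t))) := by
      rw [this]
      exact add_nonneg (mul_nonneg (by linarith) hB) (mul_nonneg (by linarith) hA)
    exact nonneg_of_mul_nonneg_right h3 (by linarith)

/-- Monotonicity of divided differences under moving nodes to the right. -/
theorem divDiff_mono (f : ℝ → ℝ) (I : Set ℝ) (k : ℕ) (hf : nIncreasingOn f I (k + 1))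
    (x y : Fin (k + 1) → ℝ) (hx : Function.Injective x) (hy : Function.Injective y)
    (hxI : ∀ i, x i ∈ I) (hyI : ∀ i, y i ∈ I) (hlt : ∀ i, x i < y i) (hne : ∀ i j, x i ≠ y j) :
    divDiff f k x ≤ divDiff f k y := by
  classical
  rw [nInc_iff] at hf
  have hinj : ∀ A : Finset (Fin (k + 1)), Function.Injective (A.piecewise y x) := by
    intro A i j hij
    by_cases hi : i ∈ A <;> by_cases hj : j ∈ A <;> simp [Finset.piecewise, hi, hj] at hij
    · exact hy hij
    · exact absurd hij.symm (hne _ _)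
    · exact absurd hij (hne _ _)
    · exact hx hij
  have key : ∀ A : Finset (Fin (k + 1)), divDiff f k x ≤ divDiff f k (A.piecewise y x) := by
    intro A
    induction A using Finset.induction_on with
    | empty => simp
    | insert j A hj ih =>
      refine ih.trans ?_
      rw [divDiff_eq_finDD _ _ _ (hinj _), divDiff_eq_finDD _ _ _ (hinj _)]
      set T := (Finset.univ.erase j).image (A.piecewise y x) with hT
      have h1 : Finset.univ.image (A.piecewise y x) = insert (x j) T := by
        rw [← Finset.insert_erase (Finset.mem_univ j), Finset.image_insert]
        simp [hj, hT]
      have h2 : Finset.univ.image ((insert j A).piecewise y x) = insert (y j) T := by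
        rw [← Finset.insert_erase (Finset.mem_univ j), Finset.image_insert]
        congr 1
        · simp
        · rw [hT]
          apply Finset.image_congr
          intro i hi
          have : i ≠ j := by simpa using hi
          simp [Finset.piecewise, this]
      have hxT : x j ∉ T := by
        intro h
        obtain ⟨i, hi, he⟩ := Finset.mem_image.1 h
        have h3 : A.piecewise y x j = x j := by simp [hj]
        rw [← h3] at he
        exact (Finset.ne_of_mem_erase hi) (hinj A he)
      have hyT : y j ∉ T := by
        intro h
        obtain ⟨i, hi, he⟩ := Finset.mem_image.1 h
        have hij := Finset.ne_of_mem_erase hi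
        by_cases hiA : i ∈ A
        · simp [hiA] at he
          exact hij (hy he)
        · simp [hiA] at he
          exact hne _ _ he
      rw [h1, h2]
      have hD := finDD_diff f T (y j) (x j) hyT hxT (hlt j).ne'
      have hTc : T.card = k := by
        rw [hT, Finset.card_image_of_injective _ (hinj A)]; simp
      have hnn : 0 ≤ finDD f (insert (y j) (insert (x j) T)) := by
        apply hf
        · rw [Finset.card_insert_of_notMem, Finset.card_insert_of_notMem hxT, hTc]
          simp [(hlt j).ne', hyT]
        · intro a ha
          simp only [Finset.mem_insert] at ha
          rcases ha with rfl | rfl | ha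
          · exact hyI j
          · exact hxI j
          · obtain ⟨i, hi, rfl⟩ := Finset.mem_image.1 ha
            by_cases hiA : i ∈ A
            · simp [hiA, hyI]
            · simp [hiA, hxI]
      have := mul_nonneg (sub_nonneg.2 (hlt j).le) hnn
      linarith
  simpa using key Finset.univ


theorem mono_of_nInc (f : ℝ → ℝ) (J : Set ℝ) (h : nIncreasingOn f J 1) : MonotoneOn f J := by
  rw [nInc_iff] at h
  intro a ha b hb hab
  rcases hab.eq_or_lt with rfl | hab
  · exact le_rfl
  have := h {a, b} (by rw [Finset.card_pair hab.ne]) (by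
    intro c hc
    simp only [Finset.mem_insert, Finset.mem_singleton] at hc
    rcases hc with rfl | rfl <;> assumption)
  rw [finDD_pair _ _ _ hab] at this
  have h2 := mul_nonneg this (sub_nonneg.2 hab.le)
  rw [div_mul_cancel₀ _ (by linarith)] at h2
  linarith

theorem nonneg_of_nInc (f : ℝ → ℝ) (J : Set ℝ) (h : nIncreasingOn f J 0) : ∀ a ∈ J, 0 ≤ f a := by
  rw [nInc_iff] at h
  intro a ha
  have := h {a} (by simp) (by simpa using ha)
  rwa [finDD_singleton] at this

theorem convex_of_nInc (f : ℝ → ℝ) (J : Set ℝ) (hJ : J.OrdConnected) (h : nIncreasingOn f J 2) :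
    ConvexOn ℝ J f := by
  rw [nInc_iff] at h
  refine convexOn_of_slope_mono_adjacent hJ.convex ?_
  intro a b c ha hc hab hbc
  have hb : b ∈ J := hJ.out ha hc ⟨hab.le, hbc.le⟩
  have hac := hab.trans hbc
  have h1 := h {c, a, b} (by
    rw [Finset.card_insert_of_notMem (by simp [hac.ne', hbc.ne']), Finset.card_pair hab.ne]) (by
    intro d hd
    simp only [Finset.mem_insert, Finset.mem_singleton] at hd
    rcases hd with rfl | rfl | rfl <;> assumption)
  have h2 := finDD_diff f {b} c a (by simp [hbc.ne']) (by simp [hab.ne]) hac.ne'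
  rw [Finset.pair_comm c b, finDD_pair _ _ _ hab, finDD_pair _ _ _ hbc] at h2
  have h3 := mul_nonneg (sub_nonneg.2 hac.le) h1
  linarith

open Filter Topology in
theorem deriv_nInc (f g : ℝ → ℝ) (J : Set ℝ) (hJ : IsOpen J)
    (hg : ∀ x ∈ J, HasDerivWithinAt f (g x) (Ioi x) x) (k : ℕ) (hf : nIncreasingOn f J (k + 1)) :
    nIncreasingOn g J k := by
  intro x hx hxJ
  have hlim : Tendsto (fun h : ℝ => ∑ j : Fin (k + 1), ((f (x j + h) - f (x j)) / h) /
      ∏ i ∈ Finset.univ.erase j, (x j - x i)) (𝓝[>] 0) (𝓝 (divDiff g k x)) := by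
    unfold divDiff
    refine tendsto_finsetSum _ fun j _ => Tendsto.div_const ?_ _
    have h1 := (hasDerivWithinAt_iff_tendsto_slope' (by simp)).1 (hg _ (hxJ j))
    have h2 : Tendsto (fun h : ℝ => x j + h) (𝓝[>] 0) (𝓝[>] (x j)) := by
      apply tendsto_nhdsWithin_of_tendsto_nhds_of_eventually_within
      · have : Tendsto (fun h : ℝ => x j + h) (𝓝 0) (𝓝 (x j + 0)) :=
          (continuous_const.add continuous_id).tendsto 0
        rw [add_zero] at this
        exact this.mono_left nhdsWithin_le_nhds
      · filter_upwards [self_mem_nhdsWithin] with h hh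
        simpa using hh
    refine (h1.comp h2).congr fun h => ?_
    simp [slope_def_field]
  refine ge_of_tendsto hlim ?_
  have hJe : ∀ᶠ h in 𝓝[>] (0:ℝ), ∀ j, x j + h ∈ J := by
    rw [eventually_all]
    intro j
    have : Tendsto (fun h : ℝ => x j + h) (𝓝 0) (𝓝 (x j + 0)) :=
          (continuous_const.add continuous_id).tendsto 0
    rw [add_zero] at this
    exact nhdsWithin_le_nhds (this.eventually (hJ.mem_nhds (hxJ j)))
  have hne : ∀ᶠ h in 𝓝[>] (0:ℝ), ∀ i j, x i ≠ x j + h := by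
    rw [eventually_all]; intro i
    rw [eventually_all]; intro j
    by_cases hij : i = j
    · subst hij
      filter_upwards [self_mem_nhdsWithin] with h hh
      have : (0:ℝ) < h := hh
      linarith
    · have : x i - x j ≠ 0 := sub_ne_zero.2 fun h => hij (hx h)
      have h0 : ∀ᶠ h in 𝓝 (0:ℝ), h ≠ x i - x j := isOpen_ne.mem_nhds this.symm
      filter_upwards [nhdsWithin_le_nhds h0] with h hh he
      exact hh (by linarith)
  filter_upwards [hJe, hne, self_mem_nhdsWithin] with h h1 h2 h3
  have h3 : (0:ℝ) < h := h3
  have hm := divDiff_mono f J k hf x (fun i => x i + h) hx (fun i j hij => hx (by simpa using hij))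
    hxJ h1 (fun i => by linarith) h2
  have : ∑ j : Fin (k + 1), ((f (x j + h) - f (x j)) / h) /
      ∏ i ∈ Finset.univ.erase j, (x j - x i) = (divDiff f k (fun i => x i + h) - divDiff f k x) / h := by
    unfold divDiff
    rw [← Finset.sum_sub_distrib, Finset.sum_div]
    refine Finset.sum_congr rfl fun j _ => ?_
    simp only [add_sub_add_right_eq_sub]
    ring
  rw [this]
  exact div_nonneg (by linarith) h3.le

/-- Smoothed measure: `∫ H d(smooth P) = ∫ (∫_0^t H) dP(t)`. -/
noncomputable def smooth (P : Measure ℝ) : Measure ℝ :=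
  ((P.prod (volume.restrict (Icc (0:ℝ) 1))).restrict {z | z.2 < z.1}).map Prod.snd

instance smooth_finite (P : Measure ℝ) [IsFiniteMeasure P] : IsFiniteMeasure (smooth P) := by
  unfold smooth
  infer_instance

theorem smooth_supp (P : Measure ℝ) [IsFiniteMeasure P] : ∀ᵐ t ∂(smooth P), t ∈ Icc (0:ℝ) 1 := by
  unfold smooth
  refine (ae_map_iff (p := fun t => t ∈ Icc (0:ℝ) 1) measurable_snd.aemeasurable
    measurableSet_Icc).2 ?_
  apply ae_restrict_of_ae
  have : ∀ᵐ s ∂(volume.restrict (Icc (0:ℝ) 1)), s ∈ Icc (0:ℝ) 1 := ae_restrict_mem measurableSet_Icc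
  exact Measure.quasiMeasurePreserving_snd.ae this

theorem integrable_of_mono (P : Measure ℝ) [IsFiniteMeasure P] (hP : ∀ᵐ t ∂P, t ∈ Icc (0:ℝ) 1)
    (H : ℝ → ℝ) (hH : MonotoneOn H (Icc 0 1)) : Integrable H P := by
  have : P = P.restrict (Icc 0 1) := (Measure.restrict_eq_self_of_ae_mem hP).symm
  rw [this]
  exact hH.integrableOn_isCompact isCompact_Icc

theorem integral_smooth (P : Measure ℝ) [IsFiniteMeasure P] (hP : ∀ᵐ t ∂P, t ∈ Icc (0:ℝ) 1)
    (H : ℝ → ℝ) (hH : MonotoneOn H (Icc 0 1)) :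
    ∫ s, H s ∂(smooth P) = ∫ t, (∫ s in (0:ℝ)..t, H s) ∂P := by
  have hi := integrable_of_mono (smooth P) (smooth_supp P) H hH
  have hms : MeasurableSet {z : ℝ × ℝ | z.2 < z.1} := measurableSet_lt measurable_snd measurable_fst
  have hi2 : Integrable H (volume.restrict (Icc (0:ℝ) 1)) :=
    integrable_of_mono _ (ae_restrict_mem measurableSet_Icc) H hH
  have hi3 : Integrable (fun z : ℝ × ℝ => H z.2) (P.prod (volume.restrict (Icc (0:ℝ) 1))) :=
    hi2.comp_snd P
  unfold smooth
  rw [integral_map measurable_snd.aemeasurable hi.1, ← integral_indicator hms,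
    integral_prod _ (hi3.indicator hms)]
  refine integral_congr_ae ?_
  filter_upwards [hP] with t ht
  have e : (fun s => indicator {z : ℝ × ℝ | z.2 < z.1} (fun z => H z.2) (t, s)) =
      indicator (Iio t) H := by
    funext s
    by_cases h : s < t <;> simp [indicator, h]
  rw [e, integral_indicator measurableSet_Iio, Measure.restrict_restrict measurableSet_Iio,
    intervalIntegral.integral_of_le ht.1, integral_Ioc_eq_integral_Ioo, ← integral_Ico_eq_integral_Ioo]
  congr 2
  ext s
  simp only [mem_inter_iff, mem_Iio, mem_Icc, mem_Ico]
  constructor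
  · rintro ⟨h1, h2, h3⟩; exact ⟨h2, h1⟩
  · rintro ⟨h1, h2⟩; exact ⟨h2, h1, by linarith [ht.2]⟩

theorem int_tpow (τ : ℝ) (hτ : 0 ≤ τ) (k : ℕ) (t : ℝ) (ht : 0 ≤ t) :
    ∫ s in (0:ℝ)..t, tpow τ k s = tpow τ (k + 1) t / (k + 1) := by
  by_cases h : τ < t
  · have hii : ∀ a b, IntervalIntegrable (tpow τ k) volume a b :=
      fun a b => (tpow_mono τ k).intervalIntegrable
    rw [← intervalIntegral.integral_add_adjacent_intervals (hii 0 τ) (hii τ t)]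
    have h1 : ∫ s in (0:ℝ)..τ, tpow τ k s = 0 := by
      rw [intervalIntegral.integral_congr (g := fun _ => (0:ℝ))]
      · simp
      · intro s hs
        rw [uIcc_of_le hτ] at hs
        simp [tpow, hs.2.not_gt]
    have h2 : ∫ s in τ..t, tpow τ k s = ∫ s in τ..t, (s - τ) ^ k := by
      apply intervalIntegral.integral_congr_ae
      refine Filter.Eventually.of_forall fun s hs => ?_
      rw [uIoc_of_le h.le] at hs
      simp [tpow, hs.1]
    rw [h1, h2, intervalIntegral.integral_comp_sub_right (fun s => s ^ k), integral_pow]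
    simp [tpow, h]
  · push Not at h
    rw [intervalIntegral.integral_congr (g := fun _ => (0:ℝ))]
    · simp [tpow, h.not_gt]
    · intro s hs
      rw [uIcc_of_le ht] at hs
      simp [tpow, (hs.2.trans h).not_gt]

theorem pow_monoOn (k : ℕ) : MonotoneOn (fun t : ℝ => t ^ k) (Icc 0 1) :=
  fun _ ha _ _ hab => pow_le_pow_left₀ ha.1 hab _


open Filter Topology in
theorem meas_upper (P N : Measure ℝ) [IsFiniteMeasure P] [IsFiniteMeasure N]
    (hN : ∀ᵐ t ∂N, t ∈ Icc (0:ℝ) 1)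
    (h : ∀ τ ∈ Ioc (0:ℝ) 1, N (Ioi τ) ≤ P (Ioi τ)) (A : Set ℝ) (hA : IsUpperSet A)
    (hA0 : A ⊆ Ioi 0) : N A ≤ P A := by
  have hgt : ∀ τ, 1 ≤ τ → N (Ioi τ) = 0 := by
    intro τ hτ
    rw [measure_eq_zero_iff_ae_notMem]
    filter_upwards [hN] with t ht h1
    have : τ < t := h1
    linarith [ht.2]
  have h' : ∀ τ, 0 < τ → N (Ioi τ) ≤ P (Ioi τ) := by
    intro τ hτ
    rcases le_total τ 1 with h1 | h1
    · exact h τ ⟨hτ, h1⟩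
    · rw [hgt τ h1]; exact bot_le
  rcases A.eq_empty_or_nonempty with rfl | hne
  · simp
  have hbdd : BddBelow A := ⟨0, fun a ha => (hA0 ha).le⟩
  set a := sInf A with ha
  have ha0 : 0 ≤ a := le_csInf hne fun b hb => (hA0 hb).le
  have hsub1 : Ioi a ⊆ A := by
    intro b hb
    obtain ⟨c, hc, hcb⟩ := exists_lt_of_csInf_lt hne hb
    exact hA hcb.le hc
  by_cases hmem : a ∈ A
  · have hAe : A = Ici a := by
      ext b
      exact ⟨fun hb => csInf_le hbdd hb, fun hb => hA hb hmem⟩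
    have hapos : 0 < a := hA0 hmem
    have hI : Ici a = ⋂ n : ℕ, Ioi (a - a / (n + 2)) := by
      ext b
      simp only [mem_Ici, mem_iInter, mem_Ioi]
      constructor
      · intro hb n
        have : 0 < a / ((n:ℝ) + 2) := by positivity
        linarith
      · intro hb
        have hl : Tendsto (fun n : ℕ => a - a / ((n:ℝ) + 2)) atTop (𝓝 (a - 0)) := by
          refine tendsto_const_nhds.sub ?_
          refine Tendsto.div_atTop tendsto_const_nhds ?_
          exact tendsto_atTop_add_const_right _ _ tendsto_natCast_atTop_atTop
        rw [sub_zero] at hl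
        exact le_of_tendsto hl (Eventually.of_forall fun n => (hb n).le)
    have hanti : Antitone fun n : ℕ => Ioi (a - a / ((n:ℝ) + 2)) := by
      intro n k hnk
      apply Ioi_subset_Ioi
      have : (n:ℝ) ≤ k := by exact_mod_cast hnk
      gcongr
    have t1 : ∀ Q : Measure ℝ, IsFiniteMeasure Q → Tendsto (fun n : ℕ => Q (Ioi (a - a / ((n:ℝ) + 2))))
        atTop (𝓝 (Q A)) := by
      intro Q _
      rw [hAe, hI]
      exact tendsto_measure_iInter_atTop (fun n => measurableSet_Ioi.nullMeasurableSet) hanti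
        ⟨0, measure_ne_top _ _⟩
    refine le_of_tendsto_of_tendsto' (t1 N inferInstance) (t1 P inferInstance) fun n => h' _ ?_
    have : a / ((n:ℝ) + 2) < a := div_lt_self hapos (by linarith [n.cast_nonneg (α := ℝ)])
    linarith
  · have hAe : A = Ioi a := by
      ext b
      refine ⟨fun hb => lt_of_le_of_ne (csInf_le hbdd hb) ?_, fun hb => hsub1 hb⟩
      rintro rfl
      exact hmem hb
    have hU : Ioi a = ⋃ n : ℕ, Ioi (a + 1 / ((n:ℝ) + 1)) := by
      ext b
      simp only [mem_Ioi, mem_iUnion]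
      constructor
      · intro hb
        obtain ⟨n, hn⟩ := exists_nat_one_div_lt (sub_pos.2 hb)
        exact ⟨n, by linarith⟩
      · rintro ⟨n, hn⟩
        have : 0 < 1 / ((n:ℝ) + 1) := by positivity
        linarith
    have hmono : Monotone fun n : ℕ => Ioi (a + 1 / ((n:ℝ) + 1)) := by
      intro n k hnk
      apply Ioi_subset_Ioi
      have : (n:ℝ) ≤ k := by exact_mod_cast hnk
      gcongr
    have t1 : ∀ Q : Measure ℝ, Tendsto (fun n : ℕ => Q (Ioi (a + 1 / ((n:ℝ) + 1))))
        atTop (𝓝 (Q A)) := by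
      intro Q
      rw [hAe, hU]
      exact tendsto_measure_iUnion_atTop hmono
    refine le_of_tendsto_of_tendsto' (t1 N) (t1 P) fun n => h' _ ?_
    positivity

theorem core_base (P N : Measure ℝ) [IsFiniteMeasure P] [IsFiniteMeasure N]
    (hP : ∀ᵐ t ∂P, t ∈ Icc (0:ℝ) 1) (hN : ∀ᵐ t ∂N, t ∈ Icc (0:ℝ) 1)
    (hmom : N.real univ ≤ P.real univ)
    (hplus : ∀ τ ∈ Ioc (0:ℝ) 1, ∫ t, tpow τ 0 t ∂N ≤ ∫ t, tpow τ 0 t ∂P)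
    (f : ℝ → ℝ) (hf0 : 0 ≤ f 0) (hf : MonotoneOn f (Icc 0 1)) :
    ∫ t, f t ∂N ≤ ∫ t, f t ∂P := by
  set F : ℝ → ℝ := fun t => f (max 0 (min 1 t)) - f 0 with hF
  have hm : ∀ t : ℝ, max 0 (min 1 t) ∈ Icc (0:ℝ) 1 := fun t =>
    ⟨le_max_left _ _, max_le zero_le_one (min_le_left _ _)⟩
  have hFm : Monotone F := by
    intro a b hab
    have : max 0 (min 1 a) ≤ max 0 (min 1 b) := max_le_max le_rfl (min_le_min le_rfl hab)
    have := hf (hm a) (hm b) this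
    simp only [hF]; linarith
  have hF0 : ∀ t, 0 ≤ F t := by
    intro t
    have := hf (⟨le_rfl, zero_le_one⟩ : (0:ℝ) ∈ Icc (0:ℝ) 1) (hm t) (hm t).1
    simp only [hF]; linarith
  have hFz : ∀ t ≤ 0, F t = 0 := by
    intro t ht
    have : max 0 (min 1 t) = 0 := max_eq_left ((min_le_right _ _).trans ht)
    simp [hF, this]
  have hrep : ∀ Q : Measure ℝ, IsFiniteMeasure Q → (∀ᵐ t ∂Q, t ∈ Icc (0:ℝ) 1) →
      ∫ t, f t ∂Q = f 0 * Q.real univ + ∫ t, F t ∂Q := by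
    intro Q _ hQ
    have h1 : ∫ t, f t ∂Q = ∫ t, (f 0 + F t) ∂Q := by
      refine integral_congr_ae ?_
      filter_upwards [hQ] with t ht
      simp [hF, ht.1, ht.2]
    rw [h1, integral_add (integrable_const _) (integrable_of_mono Q hQ F (hFm.monotoneOn _))]
    simp [mul_comm]
  rw [hrep N inferInstance hN, hrep P inferInstance hP]
  refine add_le_add (mul_le_mul_of_nonneg_left hmom hf0) ?_
  have hFi : ∀ Q : Measure ℝ, IsFiniteMeasure Q → (∀ᵐ t ∂Q, t ∈ Icc (0:ℝ) 1) → Integrable F Q :=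
    fun Q _ hQ => integrable_of_mono Q hQ F (hFm.monotoneOn _)
  have hsm : ∀ τ ∈ Ioc (0:ℝ) 1, N (Ioi τ) ≤ P (Ioi τ) := by
    intro τ hτ
    have h1 : ∀ Q : Measure ℝ, ∫ t, tpow τ 0 t ∂Q = Q.real (Ioi τ) := by
      intro Q
      have : tpow τ 0 = indicator (Ioi τ) 1 := by
        funext t
        by_cases h : τ < t <;> simp [tpow, indicator, h]
      rw [this, integral_indicator_one measurableSet_Ioi]
    have h2 := hplus τ hτ
    rw [h1, h1] at h2
    exact (ENNReal.toReal_le_toReal (measure_ne_top _ _) (measure_ne_top _ _)).1 h2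
  rw [integral_eq_lintegral_of_nonneg_ae (Filter.Eventually.of_forall hF0) (hFi N inferInstance hN).1,
    integral_eq_lintegral_of_nonneg_ae (Filter.Eventually.of_forall hF0) (hFi P inferInstance hP).1]
  refine ENNReal.toReal_mono (hFi P inferInstance hP).lintegral_lt_top.ne ?_
  rw [lintegral_eq_lintegral_meas_lt N (Filter.Eventually.of_forall hF0) hFm.measurable.aemeasurable,
    lintegral_eq_lintegral_meas_lt P (Filter.Eventually.of_forall hF0) hFm.measurable.aemeasurable]
  refine setLIntegral_mono' measurableSet_Ioi fun s hs => ?_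
  have hs : 0 < s := hs
  refine meas_upper P N hN hsm _ ?_ ?_
  · intro a b hab ha
    exact lt_of_lt_of_le ha (hFm hab)
  · intro a ha
    by_contra hc
    have h1 : s < F a := ha
    rw [hFz a (not_lt.1 hc)] at h1
    linarith

theorem core (n : ℕ) : ∀ (P N : Measure ℝ) (_ : IsFiniteMeasure P) (_ : IsFiniteMeasure N)
    (_ : ∀ᵐ t ∂P, t ∈ Icc (0:ℝ) 1) (_ : ∀ᵐ t ∂N, t ∈ Icc (0:ℝ) 1)
    (_ : ∀ k ≤ n, ∫ t, t ^ k ∂N ≤ ∫ t, t ^ k ∂P)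
    (_ : ∀ τ ∈ Ioc (0:ℝ) 1, ∫ t, tpow τ n t ∂N ≤ ∫ t, tpow τ n t ∂P)
    (f : ℝ → ℝ) (J : Set ℝ) (_ : IsOpen J) (_ : J.OrdConnected) (_ : Icc 0 1 ⊆ J)
    (_ : ∀ k ≤ n + 1, nIncreasingOn f J k), ∫ t, f t ∂N ≤ ∫ t, f t ∂P := by
  induction n with
  | zero =>
    intro P N _ _ hP hN hmom hplus f J hJo hJc hsub hf
    refine core_base P N hP hN ?_ hplus f
      (nonneg_of_nInc f J (hf 0 (by omega)) 0 (hsub ⟨le_rfl, zero_le_one⟩))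
      ((mono_of_nInc f J (hf 1 (by omega))).mono hsub)
    simpa using hmom 0 le_rfl
  | succ n ih =>
    intro P N _ _ hP hN hmom hplus f J hJo hJc hsub hf
    have hconv := convex_of_nInc f J hJc (hf 2 (by omega))
    set g : ℝ → ℝ := fun x => derivWithin f (Ioi x) x with hg
    have hderiv : ∀ x ∈ J, HasDerivWithinAt f (g x) (Ioi x) x := fun x hx =>
      hconv.hasDerivWithinAt_rightDeriv_of_mem_interior (by rwa [hJo.interior_eq])
    have hginc : ∀ k ≤ n + 1, nIncreasingOn g J k := fun k hk =>
      deriv_nInc f g J hJo hderiv k (hf _ (by omega))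
    have hgm : MonotoneOn g (Icc 0 1) := (mono_of_nInc g J (hginc 1 (by omega))).mono hsub
    have hcont : ContinuousOn f J := hconv.continuousOn hJo
    have hfm : MonotoneOn f (Icc 0 1) := (mono_of_nInc f J (hf 1 (by omega))).mono hsub
    have hftc : ∀ t ∈ Icc (0:ℝ) 1, ∫ s in (0:ℝ)..t, g s = f t - f 0 := by
      intro t ht
      have hsub' : Icc 0 t ⊆ Icc (0:ℝ) 1 := Icc_subset_Icc_right ht.2
      refine intervalIntegral.integral_eq_sub_of_hasDeriv_right_of_le ht.1
        (hcont.mono (hsub'.trans hsub))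
        (fun x hx => hderiv x (hsub (hsub' (Ioo_subset_Icc_self hx)))) ?_
      apply MonotoneOn.intervalIntegrable
      rw [uIcc_of_le ht.1]
      exact hgm.mono hsub'
    have hrep : ∀ Q : Measure ℝ, IsFiniteMeasure Q → (∀ᵐ t ∂Q, t ∈ Icc (0:ℝ) 1) →
        ∫ t, f t ∂Q = f 0 * Q.real univ + ∫ t, g t ∂(smooth Q) := by
      intro Q _ hQ
      rw [integral_smooth Q hQ g hgm]
      have h1 : ∫ t, (∫ s in (0:ℝ)..t, g s) ∂Q = ∫ t, (f t - f 0) ∂Q := by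
        refine integral_congr_ae ?_
        filter_upwards [hQ] with t ht using hftc t ht
      rw [h1, integral_sub (integrable_of_mono Q hQ f hfm) (integrable_const _)]
      simp [mul_comm]
    rw [hrep N inferInstance hN, hrep P inferInstance hP]
    refine add_le_add (mul_le_mul_of_nonneg_left ?_ ?_) ?_
    · simpa using hmom 0 (by omega)
    · exact nonneg_of_nInc f J (hf 0 (by omega)) 0 (hsub ⟨le_rfl, zero_le_one⟩)
    refine ih (smooth P) (smooth N) inferInstance inferInstance (smooth_supp P) (smooth_supp N)
      ?_ ?_ g J hJo hJc hsub hginc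
    · intro k hk
      rw [integral_smooth N hN _ (pow_monoOn k), integral_smooth P hP _ (pow_monoOn k)]
      have h1 := hmom (k + 1) (by omega)
      simp only [integral_pow, integral_div]
      simp only [ne_eq, Nat.add_eq_zero_iff, one_ne_zero, and_false, not_false_eq_true, zero_pow,
        sub_zero]
      gcongr
    · intro τ hτ
      rw [integral_smooth N hN _ ((tpow_mono τ n).monotoneOn _),
        integral_smooth P hP _ ((tpow_mono τ n).monotoneOn _)]
      have h1 := hplus τ hτ
      have h2 : ∀ Q : Measure ℝ, (∀ᵐ t ∂Q, t ∈ Icc (0:ℝ) 1) →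
          ∫ t, (∫ s in (0:ℝ)..t, tpow τ n s) ∂Q = (∫ t, tpow τ (n + 1) t ∂Q) / (n + 1) := by
        intro Q hQ
        rw [← integral_div]
        refine integral_congr_ae ?_
        filter_upwards [hQ] with t ht using int_tpow τ hτ.1.le n t ht.1
      rw [h2 N hN, h2 P hP]
      gcongr

/-- Reduction to the case `m = 0`. -/
theorem core2 (n m : ℕ) (P N : Measure ℝ) [IsFiniteMeasure P] [IsFiniteMeasure N]
    (hP : ∀ᵐ t ∂P, t ∈ Icc (0:ℝ) 1) (hN : ∀ᵐ t ∂N, t ∈ Icc (0:ℝ) 1)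
    (hmom : ∀ k ≤ n, ∫ t, t ^ k ∂N ≤ ∫ t, t ^ k ∂P)
    (hplus : ∀ τ ∈ Ioc (0:ℝ) 1, ∫ t, tpow τ n t ∂N ≤ ∫ t, tpow τ n t ∂P) (hmn : m ≤ n)
    (hmz : ∀ k < m, ∫ t, t ^ k ∂N = ∫ t, t ^ k ∂P) :
    ∀ (f : ℝ → ℝ) (J : Set ℝ) (_ : IsOpen J) (_ : J.OrdConnected) (_ : Icc 0 1 ⊆ J)
    (_ : ∀ k, m ≤ k → k ≤ n + 1 → nIncreasingOn f J k),
      Integrable f P ∧ Integrable f N ∧ ∫ t, f t ∂N ≤ ∫ t, f t ∂P := by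
  induction m with
  | zero =>
    intro f J hJo hJc hsub hf
    have hfm : MonotoneOn f (Icc 0 1) := (mono_of_nInc f J (hf 1 (by omega) (by omega))).mono hsub
    exact ⟨integrable_of_mono P hP f hfm, integrable_of_mono N hN f hfm,
      core n P N inferInstance inferInstance hP hN hmom hplus f J hJo hJc hsub
        fun k hk => hf k (Nat.zero_le _) hk⟩
  | succ m ih =>
    intro f J hJo hJc hsub hf
    have ih := ih (by omega) (fun k hk => hmz k (by omega))
    have h0 : (0:ℝ) ∈ J := hsub ⟨le_rfl, zero_le_one⟩
    obtain ⟨ε, hε, hball⟩ := Metric.isOpen_iff.1 hJo 0 h0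
    have hIoo : Ioo (-ε) (-ε / 2) ⊆ J := by
      intro a ha
      apply hball
      rw [Real.ball_eq_Ioo]
      exact ⟨by linarith [ha.1], by linarith [ha.2]⟩
    have hinf : (Ioo (-ε) (-ε / 2)).Infinite := Ioo_infinite (by linarith)
    obtain ⟨p, hp, hpc⟩ := hinf.exists_subset_card_eq (m + 1)
    have e := p.equivFinOfCardEq hpc
    have hxinj : Function.Injective (fun i => ((e.symm i : p) : ℝ)) :=
      Subtype.val_injective.comp e.symm.injective
    set x : Fin (m + 1) → ℝ := fun i => ((e.symm i : p) : ℝ) with hx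
    have hxp : ∀ i, x i ∈ Ioo (-ε) (-ε / 2) := fun i => hp (e.symm i).2
    set c := divDiff f m x with hc
    set J' := J ∩ Ioi (-ε / 2) with hJ'
    have hpow : (fun u : ℝ => u ^ m) = fun u => (u - 0) ^ m := by simp
    obtain ⟨i1, i2, i3⟩ := ih (fun u => f u - c * u ^ m) J' (hJo.inter isOpen_Ioi)
      (hJc.inter ordConnected_Ioi)
      (fun t ht => ⟨hsub ht, by simp only [mem_Ioi]; linarith [ht.1]⟩) (by
        intro k hmk hkn
        rcases hmk.eq_or_lt with rfl | hlt
        · intro y hy hyJ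
          have hmono := divDiff_mono f J m (hf (m + 1) le_rfl (by omega)) x y hxinj hy
            (fun i => hIoo (hxp i)) (fun i => (hyJ i).1)
            (fun i => (hxp i).2.trans (hyJ i).2)
            (fun i j => ((hxp i).2.trans (hyJ j).2).ne)
          rw [divDiff_eq_finDD _ _ _ hy, finDD_sub_mul, ← divDiff_eq_finDD _ _ _ hy, hpow,
            finDD_pow_one]
          · linarith
          · rw [Finset.card_image_of_injective _ hy]; simp
        · have h1 := hf k hlt hkn
          rw [nInc_iff] at h1 ⊢
          intro s hs hsJ
          rw [finDD_sub_mul, hpow, finDD_pow_zero _ _ _ (by omega)]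
          have := h1 s hs fun a ha => (hsJ a ha).1
          linarith)
    have jP : Integrable (fun t : ℝ => c * t ^ m) P :=
      (integrable_of_mono P hP _ (pow_monoOn m)).const_mul c
    have jN : Integrable (fun t : ℝ => c * t ^ m) N :=
      (integrable_of_mono N hN _ (pow_monoOn m)).const_mul c
    have e1 : f = fun t => (f t - c * t ^ m) + c * t ^ m := by funext t; ring
    have kP : Integrable f P := by rw [e1]; exact i1.add jP
    have kN : Integrable f N := by rw [e1]; exact i2.add jN
    refine ⟨kP, kN, ?_⟩
    rw [integral_sub kN jN, integral_sub kP jP, integral_const_mul, integral_const_mul,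
      hmz m (by omega)] at i3
    linarith


theorem affine_nInc (f : ℝ → ℝ) (I : Set ℝ) (x y : ℝ) (hxy : x < y) (k : ℕ)
    (hf : nIncreasingOn f I k) :
    nIncreasingOn (fun t => f ((1 - t) * x + t * y)) ((fun t => (1 - t) * x + t * y) ⁻¹' I) k := by
  intro z hz hzI
  have h := hf (fun i => (1 - z i) * x + z i * y) (by
    intro i j hij
    apply hz
    have h1 : (z i - z j) * (y - x) = 0 := by
      simp only at hij
      linear_combination hij
    rcases mul_eq_zero.1 h1 with h2 | h2
    · linarith
    · linarith) hzI
  have hpos : (0:ℝ) < y - x := by linarith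
  have e : divDiff (fun t => f ((1 - t) * x + t * y)) k z =
      (y - x) ^ k * divDiff f k (fun i => (1 - z i) * x + z i * y) := by
    unfold divDiff
    rw [Finset.mul_sum]
    refine Finset.sum_congr rfl fun j _ => ?_
    have h1 : ∏ i ∈ Finset.univ.erase j,
        ((1 - z j) * x + z j * y - ((1 - z i) * x + z i * y)) =
        (y - x) ^ k * ∏ i ∈ Finset.univ.erase j, (z j - z i) := by
      have : (y - x) ^ k = ∏ i ∈ (Finset.univ : Finset (Fin (k + 1))).erase j, (y - x) := by
        simp
      rw [this, ← Finset.prod_mul_distrib]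
      exact Finset.prod_congr rfl fun i _ => by ring
    rw [h1]
    have h2 : (y - x) ^ k ≠ 0 := by positivity
    rw [← mul_div_assoc, mul_div_mul_left _ _ h2]
  rw [e]
  positivity

theorem sInt_const_mul (μ : SignedMeasure ℝ) (A : Set ℝ) (c : ℝ) (f : ℝ → ℝ) :
    sInt μ A (fun t => c * f t) = c * sInt μ A f := by
  unfold sInt
  rw [integral_const_mul, integral_const_mul]
  ring

theorem tpow_setIntegral (Q : Measure ℝ) (τ : ℝ) (hτ : 0 ≤ τ) (k : ℕ) :
    ∫ t in Icc (0:ℝ) 1, tpow τ k t ∂Q = ∫ t in Ioc τ 1, (t - τ) ^ k ∂Q := by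
  have e : tpow τ k = indicator (Ioi τ) (fun t => (t - τ) ^ k) := by
    funext t
    by_cases h : τ < t <;> simp [tpow, indicator, h]
  rw [e, integral_indicator measurableSet_Ioi, Measure.restrict_restrict measurableSet_Ioi]
  congr 2
  ext t
  simp only [mem_inter_iff, mem_Ioi, mem_Icc, mem_Ioc]
  constructor
  · rintro ⟨h1, h2, h3⟩; exact ⟨h1, h3⟩
  · rintro ⟨h1, h2⟩; exact ⟨h1, by linarith, h2⟩

theorem stmt15 (I : Set ℝ) (hIo : IsOpen I) (hIc : I.OrdConnected) (hIne : I.Nonempty)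
    (hbdd : BddBelow I) (m n : ℕ) (hmn : m < n) (μ : MeasureTheory.SignedMeasure ℝ) :
    (∀ f : ℝ → ℝ, (∀ k, m ≤ k → k ≤ n → nIncreasingOn f I k) →
        ∀ x ∈ I, ∀ y ∈ I, x < y →
          0 ≤ sInt μ (Icc 0 1) (fun t => f ((1 - t) * x + t * y))) ↔
      ((∀ k < m, muK μ k 0 = 0) ∧
        (∀ k, m ≤ k → k < n → 0 ≤ muK μ k 0) ∧
        ∀ τ ∈ Ioc (0:ℝ) 1, 0 ≤ muPlus μ (n - 1) τ) := by
  obtain ⟨n, rfl⟩ : ∃ n', n = n' + 1 := ⟨n - 1, by omega⟩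
  constructor
  · intro h
    obtain ⟨x, hx⟩ := hIne
    obtain ⟨y, hxy, hy⟩ : ∃ y, x < y ∧ y ∈ I := by
      obtain ⟨ε, hε, hball⟩ := Metric.isOpen_iff.1 hIo x hx
      refine ⟨x + ε / 2, by linarith, hball ?_⟩
      rw [Real.ball_eq_Ioo]
      constructor <;> linarith
    have hpos : 0 < y - x := by linarith
    refine ⟨?_, ?_, ?_⟩
    · intro k hk
      have key : ∀ c : ℝ, 0 ≤ c * ((y - x) ^ k * muK μ k 0) := by
        intro c
        have h1 := h (fun u => c * (u - x) ^ k) (by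
          intro j hmj _
          rw [nInc_iff]
          intro s hs _
          rw [finDD_mul, finDD_pow_zero _ _ _ (by omega), mul_zero]) x hx y hy hxy
        have e : (fun t : ℝ => c * ((1 - t) * x + t * y - x) ^ k) =
            fun t => (c * (y - x) ^ k) * (t - 0) ^ k := by
          funext t
          rw [mul_assoc, ← mul_pow]
          congr 2
          ring
        rw [e, sInt_const_mul] at h1
        unfold muK
        linarith
      have h1 := key 1
      have h2 := key (-1)
      have h3 : (y - x) ^ k * muK μ k 0 = 0 := by linarith
      rcases mul_eq_zero.1 h3 with h4 | h4
      · exact absurd h4 (by positivity)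
      · exact h4
    · intro k hmk hkn
      set c := sInf I with hc
      have hcI : ∀ a ∈ I, c ≤ a := fun a ha => csInf_le hbdd ha
      have hcy : c < y := lt_of_le_of_lt (hcI x hx) hxy
      have hmem : ∀ z ∈ Ioo c y, z ∈ I := by
        intro z hz
        obtain ⟨w, hw, hwz⟩ := exists_lt_of_csInf_lt ⟨x, hx⟩ hz.1
        exact hIc.out hw hy ⟨hwz.le, hz.2.le⟩
      have hcont : Continuous fun z => sInt μ (Icc 0 1) (fun t => ((1 - t) * z + t * y - c) ^ k) := by
        unfold sInt
        refine Continuous.sub ?_ ?_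
        · exact continuous_parametric_integral_of_continuous
            (f := fun z t => ((1 - t) * z + t * y - c) ^ k) (by unfold Function.uncurry; fun_prop)
            isCompact_Icc
        · exact continuous_parametric_integral_of_continuous
            (f := fun z t => ((1 - t) * z + t * y - c) ^ k) (by unfold Function.uncurry; fun_prop)
            isCompact_Icc
      have hlim := (hcont.tendsto c).mono_left (nhdsWithin_le_nhds (s := Ioi c))
      have hge := ge_of_tendsto hlim (b := 0) (by
        filter_upwards [Ioo_mem_nhdsGT hcy] with z hz
        exact h (fun u => (u - c) ^ k) (by
          intro j _ _
          rw [nInc_iff]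
          intro s hs hsI
          exact finDD_pow_nonneg _ _ _ (Finset.card_pos.1 (by omega)) fun a ha => hcI a (hsI a ha))
          z (hmem z hz) y hy hz.2)
      have e : (fun t : ℝ => ((1 - t) * c + t * y - c) ^ k) =
            fun t => (y - c) ^ k * (t - 0) ^ k := by
          funext t
          rw [← mul_pow]
          congr 1
          ring
      rw [e, sInt_const_mul] at hge
      exact nonneg_of_mul_nonneg_right hge (pow_pos (by linarith) _)
    · intro τ hτ
      simp only [Nat.add_sub_cancel]
      have h1 := h (tpow ((1 - τ) * x + τ * y) n) (by
        intro k _ hk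
        rw [nInc_iff]
        intro s hs _
        exact finDD_tpow _ _ _ (Finset.card_pos.1 (by omega)) (by omega)) x hx y hy hxy
      have e : (fun t : ℝ => tpow ((1 - τ) * x + τ * y) n ((1 - t) * x + t * y)) =
          fun t => (y - x) ^ n * tpow τ n t := by
        funext t
        have h2 : (1 - τ) * x + τ * y < (1 - t) * x + t * y ↔ τ < t := by
          rw [← sub_pos, ← sub_pos (a := t),
            show (1 - t) * x + t * y - ((1 - τ) * x + τ * y) = (t - τ) * (y - x) by ring]
          exact mul_pos_iff_of_pos_right hpos
        unfold tpow
        simp only [h2]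
        split_ifs
        · rw [← mul_pow]
          congr 1
          ring
        · simp
      rw [e, sInt_const_mul] at h1
      have h2 := nonneg_of_mul_nonneg_right h1 (pow_pos hpos _)
      unfold sInt at h2
      rw [tpow_setIntegral _ _ hτ.1.le, tpow_setIntegral _ _ hτ.1.le] at h2
      exact h2
  · rintro ⟨h1, h2, h3⟩ f hf x hx y hy hxy
    simp only [Nat.add_sub_cancel] at h3
    have hcontA : Continuous (fun t : ℝ => (1 - t) * x + t * y) := by fun_prop
    have hmonoA : Monotone (fun t : ℝ => (1 - t) * x + t * y) := by
      intro a b hab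
      have := mul_nonneg (sub_nonneg.2 hab) (sub_nonneg.2 hxy.le)
      simp only
      linarith
    have h1' : ∀ k < m, ∫ t in Icc (0:ℝ) 1, t ^ k ∂μ.toJordanDecomposition.negPart =
        ∫ t in Icc (0:ℝ) 1, t ^ k ∂μ.toJordanDecomposition.posPart := by
      intro k hk
      have := h1 k hk
      simp only [muK, sInt, sub_zero] at this
      linarith
    have := core2 n m (μ.toJordanDecomposition.posPart.restrict (Icc 0 1))
      (μ.toJordanDecomposition.negPart.restrict (Icc 0 1))
      (ae_restrict_mem measurableSet_Icc) (ae_restrict_mem measurableSet_Icc)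
      (by
        intro k hk
        rcases lt_or_ge k m with hkm | hkm
        · exact (h1' k hkm).le
        · have := h2 k hkm (by omega)
          simp only [muK, sInt, sub_zero] at this
          linarith)
      (by
        intro τ hτ
        rw [tpow_setIntegral _ _ hτ.1.le, tpow_setIntegral _ _ hτ.1.le]
        have := h3 τ hτ
        simp only [muPlus, sInt] at this
        linarith)
      (by omega) h1' (fun t => f ((1 - t) * x + t * y))
      ((fun t => (1 - t) * x + t * y) ⁻¹' I) (hIo.preimage hcontA)
      (hIc.preimage_mono hmonoA)
      (by
        intro t ht
        refine hIc.out hx hy ⟨?_, ?_⟩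
        · have := mul_nonneg ht.1 (sub_nonneg.2 hxy.le)
          simp only
          linarith
        · have := mul_nonneg (sub_nonneg.2 ht.2) (sub_nonneg.2 hxy.le)
          simp only
          linarith)
      (fun k hmk hkn => affine_nInc f I x y hxy k (hf k hmk hkn))
    unfold sInt
    linarith [this.2.2]
end

section
/- Not every convex function satisfies the inequality 3f((3x+y)/4) + 3f((x+3y)/4) ≤ f(x) + 4f((x+y)/2) + f(y) for x < y. Precisely: let x < y be real numbers and let f : ℝ → ℝ be defined by f(u) := max(0, u − (x+y)/2). Then f is convex, but 3f((3x+y)/4) + 3f((x+3y)/4) > f(x) + 4f((x+y)/2) + f(y); indeed the left-hand side equals (3/4)(y−x) and the right-hand side equals (1/2)(y−x). -/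
theorem stmt17 (x y : ℝ) (hxy : x < y) (f : ℝ → ℝ)
    (hf : ∀ u, f u = max 0 (u - (x + y) / 2)) :
    ConvexOn ℝ Set.univ f ∧
      f x + 4 * f ((x + y) / 2) + f y <
        3 * f ((3 * x + y) / 4) + 3 * f ((x + 3 * y) / 4) ∧
      3 * f ((3 * x + y) / 4) + 3 * f ((x + 3 * y) / 4) = 3 / 4 * (y - x) ∧
      f x + 4 * f ((x + y) / 2) + f y = 1 / 2 * (y - x) := by
  have h1 : f x = 0 := by rw [hf]; exact max_eq_left (by linarith)
  have h2 : f ((x + y) / 2) = 0 := by rw [hf]; exact max_eq_left (by linarith)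
  have h3 : f y = y - (x + y) / 2 := by rw [hf]; exact max_eq_right (by linarith)
  have h4 : f ((3 * x + y) / 4) = 0 := by rw [hf]; exact max_eq_left (by linarith)
  have h5 : f ((x + 3 * y) / 4) = (x + 3 * y) / 4 - (x + y) / 2 := by
    rw [hf]; exact max_eq_right (by linarith)
  refine ⟨⟨convex_univ, ?_⟩, ?_, ?_, ?_⟩
  · intro u _ v _ a b ha hb hab
    simp only [smul_eq_mul, hf]
    have e1 := mul_le_mul_of_nonneg_left (le_max_left 0 (u - (x + y) / 2)) ha
    have e2 := mul_le_mul_of_nonneg_left (le_max_left 0 (v - (x + y) / 2)) hb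
    have e3 := mul_le_mul_of_nonneg_left (le_max_right 0 (u - (x + y) / 2)) ha
    have e4 := mul_le_mul_of_nonneg_left (le_max_right 0 (v - (x + y) / 2)) hb
    apply max_le
    · linarith
    · have hb' : b = 1 - a := by linarith
      subst hb'
      linarith
  · rw [h1, h2, h3, h4, h5]; linarith
  · rw [h4, h5]; ring
  · rw [h1, h2, h3]; ring
end

section
/- Let I ⊆ ℝ be a nonempty open interval and let f : I → ℝ be continuous. If f is both 2-increasing (i.e., convex) and 3-increasing on I, then 3f((3x+y)/4) + 3f((x+3y)/4) ≤ f(x) + 4f((x+y)/2) + f(y) for all x, y ∈ I with x < y. -/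
open MeasureTheory Set

theorem stmt18 (I : Set ℝ) (hIo : IsOpen I) (hIc : I.OrdConnected) (hIne : I.Nonempty)
    (f : ℝ → ℝ) (hf : ContinuousOn f I)
    (h2 : nIncreasingOn f I 2) (h3 : nIncreasingOn f I 3) :
    ∀ x ∈ I, ∀ y ∈ I, x < y →
      3 * f ((3 * x + y) / 4) + 3 * f ((x + 3 * y) / 4) ≤
        f x + 4 * f ((x + y) / 2) + f y := by
  intro x hx y hy hxy
  obtain ⟨h, hh⟩ : ∃ h, h = (y - x) / 4 := ⟨_, rfl⟩
  have hpos : 0 < h := by rw [hh]; linarith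
  have hne : h ≠ 0 := hpos.ne'
  have hyx : y = x + 4 * h := by rw [hh]; ring
  have e1 : (3 * x + y) / 4 = x + h := by rw [hyx]; ring
  have e2 : (x + y) / 2 = x + 2 * h := by rw [hyx]; ring
  have e3 : (x + 3 * y) / 4 = x + 3 * h := by rw [hyx]; ring
  rw [e1, e2, e3, hyx]
  have hm : ∀ t, x ≤ t → t ≤ x + 4 * h → t ∈ I := fun t h1 h2 =>
    hIc.out hx hy ⟨h1, by rw [hyx]; exact h2⟩
  have A := h2 (fun j => x + (j : ℕ) * h)
    (by
      intro a b hab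
      have : ((a : ℕ) : ℝ) = (b : ℕ) := by
        apply mul_right_cancel₀ hne
        simpa using hab
      exact Fin.ext (by exact_mod_cast this))
    (by
      intro j
      fin_cases j <;> apply hm <;> norm_num <;> nlinarith)
  have B := h3 (fun j => x + h + (j : ℕ) * h)
    (by
      intro a b hab
      have : ((a : ℕ) : ℝ) = (b : ℕ) := by
        apply mul_right_cancel₀ hne
        simpa using hab
      exact Fin.ext (by exact_mod_cast this))
    (by
      intro j
      fin_cases j <;> apply hm <;> norm_num <;> nlinarith)
  have u2 : ∀ j : Fin 3, Finset.univ.erase j = Finset.univ.filter (· ≠ j) := by decide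
  have u3 : ∀ j : Fin 4, Finset.univ.erase j = Finset.univ.filter (· ≠ j) := by decide
  have A' : divDiff f 2 (fun j => x + (j : ℕ) * h)
      = (f x - 2 * f (x + h) + f (x + 2 * h)) / (2 * h ^ 2) := by
    unfold divDiff
    change (∑ j : Fin 3, f (x + ((j : ℕ) : ℝ) * h) / ∏ i ∈ (Finset.univ : Finset (Fin 3)).erase j,
      ((x + ((j : ℕ) : ℝ) * h) - (x + ((i : ℕ) : ℝ) * h))) = _
    simp only [u2, Finset.prod_filter, Fin.sum_univ_three, Fin.prod_univ_three]
    simp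
    field_simp
    ring
  have B' : divDiff f 3 (fun j => x + h + (j : ℕ) * h)
      = (f (x + 4 * h) - 3 * f (x + 3 * h) + 3 * f (x + 2 * h) - f (x + h)) / (6 * h ^ 3) := by
    have q2 : x + h + h = x + 2 * h := by ring
    have q3 : x + h + 2 * h = x + 3 * h := by ring
    have q4 : x + h + 3 * h = x + 4 * h := by ring
    unfold divDiff
    change (∑ j : Fin 4, f (x + h + ((j : ℕ) : ℝ) * h) / ∏ i ∈ (Finset.univ : Finset (Fin 4)).erase j,
      ((x + h + ((j : ℕ) : ℝ) * h) - (x + h + ((i : ℕ) : ℝ) * h))) = _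
    simp only [u3, Finset.prod_filter, Fin.sum_univ_four, Fin.prod_univ_four]
    simp [Fin.ext_iff, q2, q3, q4]
    field_simp
    ring
  rw [A'] at A
  rw [B'] at B
  rw [le_div_iff₀ (by positivity)] at A B
  linarith
end

section
/- Let I ⊆ ℝ be a nonempty open interval and let f : I → ℝ be continuous. If f is both 2-increasing (i.e., convex) and 3-increasing on I, then (1/(y−x)) ∫_x^y f(t) dt ≤ (1/5) f(x) + (3/5) f((x+y)/2) + (1/5) f(y) for all x, y ∈ I with x < y, where the integral is with respect to Lebesgue measure. -/
open MeasureTheory Set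

lemma dd2 (f : ℝ → ℝ) (I : Set ℝ) (h2 : nIncreasingOn f I 2) (a t b : ℝ) (ha : a ∈ I)
    (ht : t ∈ I) (hb : b ∈ I) (h1 : a < t) (h3 : t < b) :
    f t * (b - a) ≤ f a * (b - t) + f b * (t - a) := by
  have h := h2 ![a, t, b] (by
    intro i j hij
    fin_cases i <;> fin_cases j <;> simp at hij ⊢ <;> linarith) (by
    intro j; fin_cases j <;> simpa)
  have e0 : Finset.univ.erase (0 : Fin 3) = {1, 2} := by decide
  have e1 : Finset.univ.erase (1 : Fin 3) = {0, 2} := by decide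
  have e2 : Finset.univ.erase (2 : Fin 3) = {0, 1} := by decide
  unfold divDiff at h
  rw [Fin.sum_univ_three, e0, e1, e2, Finset.prod_pair (by decide),
    Finset.prod_pair (by decide), Finset.prod_pair (by decide)] at h
  simp only [Matrix.cons_val_zero, Matrix.cons_val_one, Matrix.cons_val] at h
  have p1 : 0 < t - a := by linarith
  have p2 : 0 < b - t := by linarith
  have p3 : 0 < b - a := by linarith
  have q1 : a - t ≠ 0 := by linarith
  have q2 : t - b ≠ 0 := by linarith
  have q3 : a - b ≠ 0 := by linarith
  have e : f a / ((a - t) * (a - b)) + f t / ((t - a) * (t - b)) + f b / ((b - a) * (b - t))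
      = (f a * (b - t) + f b * (t - a) - f t * (b - a)) / ((t - a) * (b - t) * (b - a)) := by
    rw [show a - t = -(t - a) by ring, show a - b = -(b - a) by ring,
      show t - b = -(b - t) by ring]
    field_simp
    ring
  rw [e] at h
  have hq : 0 < (t - a) * (b - t) * (b - a) := by positivity
  rw [le_div_iff₀ hq] at h
  linarith

lemma dd3 (f : ℝ → ℝ) (I : Set ℝ) (h3 : nIncreasingOn f I 3) (m h s : ℝ) (hs : 0 < s)
    (hsh : s < h) (hc : m - h / 3 ∈ I) (hm : m ∈ I) (ht : m + s ∈ I) (hb : m + h ∈ I) :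
    f (m + s) ≤ f m + (f (m + h) - f m) / h * s +
      (9 / 4 * f (m - h / 3) - 3 * f m + 3 / 4 * f (m + h)) / h ^ 2 * (s * (s - h)) := by
  obtain ⟨h0, rfl⟩ : ∃ h0, h0 = h := ⟨_, rfl⟩
  have h := h3 ![m - h0 / 3, m, m + s, m + h0] (by
    intro i j hij
    fin_cases i <;> fin_cases j <;> simp at hij ⊢ <;> linarith) (by
    intro j; fin_cases j <;> simpa)
  have e0 : Finset.univ.erase (0 : Fin 4) = {1, 2, 3} := by decide
  have e1 : Finset.univ.erase (1 : Fin 4) = {0, 2, 3} := by decide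
  have e2 : Finset.univ.erase (2 : Fin 4) = {0, 1, 3} := by decide
  have e3 : Finset.univ.erase (3 : Fin 4) = {0, 1, 2} := by decide
  unfold divDiff at h
  rw [Fin.sum_univ_four, e0, e1, e2, e3] at h
  repeat rw [Finset.prod_insert (by decide), Finset.prod_pair (by decide)] at h
  simp only [Matrix.cons_val_zero, Matrix.cons_val_one, Matrix.cons_val] at h
  generalize f (m + s) = F2 at *
  generalize f (m + h0) = F3 at *
  generalize f (m - h0 / 3) = F0 at *
  generalize f m = F1 at *
  have hh : 0 < h0 := by linarith
  have hd : 0 < h0 - s := by linarith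
  have hw : 0 < s + h0 / 3 := by linarith
  have key := mul_nonneg h (by positivity : 0 ≤ (s + h0 / 3) * s * (h0 - s))
  rw [show m - h0 / 3 - m = -(h0 / 3) by ring, show m - h0 / 3 - (m + s) = -(s + h0 / 3) by ring,
    show m - h0 / 3 - (m + h0) = -(4 * h0 / 3) by ring, show m - (m - h0 / 3) = h0 / 3 by ring,
    show m - (m + s) = - s by ring, show m - (m + h0) = -h0 by ring,
    show m + s - (m - h0 / 3) = s + h0 / 3 by ring, show m + s - m = s by ring,
    show m + s - (m + h0) = -(h0 - s) by ring, show m + h0 - (m - h0 / 3) = 4 * h0 / 3 by ring,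
    show m + h0 - m = h0 by ring, show m + h0 - (m + s) = h0 - s by ring] at key
  refine le_of_sub_nonneg (key.trans_eq ?_)
  field_simp
  ring

lemma int_mono (f g : ℝ → ℝ) (a b : ℝ) (hab : a ≤ b) (hf : ContinuousOn f (Icc a b))
    (hg : Continuous g) (h : ∀ t ∈ Ioo a b, f t ≤ g t) :
    ∫ t in a..b, f t ≤ ∫ t in a..b, g t :=
  intervalIntegral.integral_mono_on_of_le_Ioo hab
    (hf.intervalIntegrable_of_Icc hab) (hg.intervalIntegrable a b) h

lemma trap (I : Set ℝ) (hIc : I.OrdConnected) (f : ℝ → ℝ) (hf : ContinuousOn f I)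
    (h2 : nIncreasingOn f I 2) (a b : ℝ) (ha : a ∈ I) (hb : b ∈ I) (hab : a < b) :
    ∫ t in a..b, f t ≤ (b - a) / 2 * (f a + f b) := by
  have hp : 0 < b - a := by linarith
  refine (int_mono f (fun t => f a + (f b - f a) / (b - a) * (t - a)) a b hab.le
    (hf.mono (hIc.out ha hb)) (by fun_prop) ?_).trans_eq ?_
  · intro t ht
    have := dd2 f I h2 a t b ha (hIc.out ha hb ⟨ht.1.le, ht.2.le⟩) hb ht.1 ht.2
    have e : f a + (f b - f a) / (b - a) * (t - a)
      = (f a * (b - t) + f b * (t - a)) / (b - a) := by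
      field_simp; ring
    simp only [e]
    rwa [le_div_iff₀ hp]
  · have hD : ∀ t ∈ uIcc a b, HasDerivAt
        (fun t => f a * t + (f b - f a) / (b - a) * ((t - a) ^ 2 / 2))
        (f a + (f b - f a) / (b - a) * (t - a)) t := by
      intro t _
      have h := ((hasDerivAt_id t).const_mul (f a)).add
        (((((hasDerivAt_id t).sub_const a).pow 2).div_const 2).const_mul ((f b - f a) / (b - a)))
      refine h.congr_deriv ?_
      simp
    rw [intervalIntegral.integral_eq_sub_of_hasDerivAt hD
      ((by fun_prop : Continuous _).intervalIntegrable a b)]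
    field_simp
    ring

lemma quad (I : Set ℝ) (hIc : I.OrdConnected) (f : ℝ → ℝ) (hf : ContinuousOn f I)
    (h3 : nIncreasingOn f I 3) (m h : ℝ) (hh : 0 < h) (hc : m - h / 3 ∈ I) (hm : m ∈ I)
    (hb : m + h ∈ I) :
    ∫ t in m..(m + h), f t ≤ h * (f m + 3 / 8 * f (m + h) - 3 / 8 * f (m - h / 3)) := by
  set B := (f (m + h) - f m) / h with hB
  set C := (9 / 4 * f (m - h / 3) - 3 * f m + 3 / 4 * f (m + h)) / h ^ 2 with hC
  refine (int_mono f (fun t => f m + B * (t - m) + C * ((t - m) * (t - m - h))) m (m + h)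
    (by linarith) (hf.mono (hIc.out hm hb)) (by fun_prop) ?_).trans_eq ?_
  · intro t ht
    have e : m + (t - m) = t := by ring
    have := dd3 f I h3 m h (t - m) (by linarith [ht.1]) (by linarith [ht.2]) hc hm
      (by rw [e]; exact hIc.out hm hb ⟨ht.1.le, ht.2.le⟩) hb
    rwa [e] at this
  · have hD : ∀ t ∈ uIcc m (m + h), HasDerivAt
        (fun t => f m * t + B * ((t - m) ^ 2 / 2) +
          C * ((t - m) ^ 3 / 3 - h * ((t - m) ^ 2 / 2)))
        (f m + B * (t - m) + C * ((t - m) * (t - m - h))) t := by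
      intro t _
      have d := (hasDerivAt_id t).sub_const m
      have d2 := (d.pow 2).div_const 2
      have d3 := (d.pow 3).div_const 3
      have h := (((hasDerivAt_id t).const_mul (f m)).add (d2.const_mul B)).add
        ((d3.sub (d2.const_mul h)).const_mul C)
      refine h.congr_deriv ?_
      simp
      left
      ring
    rw [intervalIntegral.integral_eq_sub_of_hasDerivAt hD
      ((by fun_prop : Continuous _).intervalIntegrable _ _), hB, hC]
    field_simp
    ring

theorem stmt19 (I : Set ℝ) (hIo : IsOpen I) (hIc : I.OrdConnected) (hIne : I.Nonempty)
    (f : ℝ → ℝ) (hf : ContinuousOn f I)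
    (h2 : nIncreasingOn f I 2) (h3 : nIncreasingOn f I 3) :
    ∀ x ∈ I, ∀ y ∈ I, x < y →
      (1 / (y - x)) * ∫ t in x..y, f t ≤
        1 / 5 * f x + 3 / 5 * f ((x + y) / 2) + 1 / 5 * f y := by
  intro x hx y hy hxy
  obtain ⟨m, hm⟩ : ∃ m, m = (x + y) / 2 := ⟨_, rfl⟩
  obtain ⟨h, hh⟩ : ∃ h, h = (y - x) / 2 := ⟨_, rfl⟩
  have hpos : 0 < h := by linarith
  have ex : x = m - h := by linarith
  have ey : y = m + h := by linarith
  rw [← hm]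
  clear hm hh
  subst ex ey
  have hS := hIc.out hx hy
  have hcI : m - h / 3 ∈ I := hS ⟨by linarith, by linarith⟩
  have hmI : m ∈ I := hS ⟨by linarith, by linarith⟩
  have i1 := trap I hIc f hf h2 (m - h) (m - h / 3) hx hcI (by linarith)
  have i2 := trap I hIc f hf h2 (m - h / 3) m hcI hmI (by linarith)
  have i3 := quad I hIc f hf h3 m h hpos hcI hmI hy
  have c1 := dd2 f I h2 (m - h) (m - h / 3) m hx hcI hmI (by linarith) (by linarith)
  have c2 := dd2 f I h2 (m - h) m (m + h) hx hmI hy (by linarith) (by linarith)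
  have ii : ∀ a ∈ I, ∀ b ∈ I, a ≤ b → IntervalIntegrable f volume a b := fun a ha b hb hab =>
    (hf.mono (hIc.out ha hb)).intervalIntegrable_of_Icc hab
  have a1 := ii _ hx _ hcI (by linarith)
  have a2 := ii _ hcI _ hmI (by linarith)
  have a3 := ii _ hmI _ hy (by linarith)
  have s1 := intervalIntegral.integral_add_adjacent_intervals a1 a2
  have s2 := intervalIntegral.integral_add_adjacent_intervals (a1.trans a2) a3
  have e : 1 / (m + h - (m - h)) * (∫ t in (m - h)..(m + h), f t)
      = (∫ t in (m - h)..(m + h), f t) / (2 * h) := by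
    rw [show m + h - (m - h) = 2 * h by ring]; ring
  rw [e, div_le_iff₀ (by positivity)]
  nlinarith
end
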